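/- Given an architecture A, alphabet Σ, a CPDS S over (A,Σ), and k ≥ 1, one can construct a tree automaton A_S^{k-stw} such that for every valid k-STT τ whose coloring has empty domain and whose graph G_τ is a CBM over (A,Σ): τ ∈ L(A_S^{k-stw}) if and only if G_τ ∈ L(S). -/

import Mathlib

/-! ### Architectures and concurrent behaviors with matching (CBMs) -/

/-- The three kinds of data structures. -/
inductive DSKind : Type
  | stack
  | queue
  | bag
deriving DecidableEq

/-- An architecture: a finite set of processes, a finite set of data structures
(each a stack, queue, or bag), with writer and reader processes; stacks are
written and read by the same process. -/
structure Architecture where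
  Procs : Type
  DS : Type
  procsFintype : Fintype Procs
  dsFintype : Fintype DS
  procsDecEq : DecidableEq Procs
  dsDecEq : DecidableEq DS
  kind : DS → DSKind
  Writer : DS → Procs
  Reader : DS → Procs
  stack_wr : ∀ d, kind d = DSKind.stack → Writer d = Reader d

attribute [instance] Architecture.procsFintype Architecture.dsFintype
  Architecture.procsDecEq Architecture.dsDecEq

/-- Potential events: a process together with a (1-based) position. -/
abbrev Architecture.Event (A : Architecture) : Type := A.Procs × ℕ

/-- The data of a CBM: one word per process and one matching relation per
data structure (on potential events). -/
structure PreCBM (A : Architecture) (Alph : Type) where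
  word : A.Procs → List Alph
  mrel : A.DS → A.Event → A.Event → Prop

namespace PreCBM

variable {A : Architecture} {Alph : Type}

/-- `(p,i)` is an event iff `1 ≤ i ≤ |w_p|`. -/
def isEvent (M : PreCBM A Alph) (e : A.Event) : Prop :=
  1 ≤ e.2 ∧ e.2 ≤ (M.word e.1).length

/-- The set of events of `M`. -/
def events (M : PreCBM A Alph) : Set A.Event := {e | M.isEvent e}

/-- The label of event `(p,i)` is the `i`-th letter of `w_p`. -/
def label (M : PreCBM A Alph) (e : A.Event) : Option Alph :=
  (M.word e.1)[e.2 - 1]?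

/-- Process-successor relation `(p,i) → (p,i+1)`. -/
def procSucc (M : PreCBM A Alph) (e f : A.Event) : Prop :=
  M.isEvent e ∧ M.isEvent f ∧ f.1 = e.1 ∧ f.2 = e.2 + 1

/-- `e ▷ f` for some data structure. -/
def mat (M : PreCBM A Alph) (e f : A.Event) : Prop := ∃ d, M.mrel d e f

def step (M : PreCBM A Alph) (e f : A.Event) : Prop := M.procSucc e f ∨ M.mat e f

/-- The causal order `< = (→ ∪ ▷)⁺`. -/
def lt (M : PreCBM A Alph) : A.Event → A.Event → Prop := Relation.TransGen M.step

/-- An event is internal if it is not the endpoint of any matching edge. -/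
def isInternal (M : PreCBM A Alph) (e : A.Event) : Prop :=
  ¬ ∃ d f, M.mrel d e f ∨ M.mrel d f e

/-- The CBM axioms. -/
structure IsCBM (M : PreCBM A Alph) : Prop where
  mrel_valid : ∀ d e f, M.mrel d e f →
    M.isEvent e ∧ M.isEvent f ∧ e.1 = A.Writer d ∧ f.1 = A.Reader d
  disjoint : ∀ d d' e f e' f', M.mrel d e f → M.mrel d' e' f' →
    ¬ (d = d' ∧ e = e' ∧ f = f') → e ≠ e' ∧ e ≠ f' ∧ f ≠ e' ∧ f ≠ f'
  irrefl : ∀ e, ¬ M.lt e e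
  lifo : ∀ d, A.kind d = DSKind.stack → ∀ e₁ f₁ e₂ f₂,
    M.mrel d e₁ f₁ → M.mrel d e₂ f₂ → M.lt e₁ e₂ → M.lt e₂ f₁ → M.lt f₂ f₁
  fifo : ∀ d, A.kind d = DSKind.queue → ∀ e₁ f₁ e₂ f₂,
    M.mrel d e₁ f₁ → M.mrel d e₂ f₂ → M.lt e₁ e₂ → M.lt f₁ f₂

end PreCBM

/-- Concurrent behaviors with matching over `(A, Alph)`. -/
def CBM (A : Architecture) (Alph : Type) : Type := {M : PreCBM A Alph // M.IsCBM}
/-! ### Systems of concurrent processes with data structures (CPDS) -/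

/-- A CPDS over an architecture `A` and alphabet `Alph`. -/
structure CPDS (A : Architecture) (Alph : Type) where
  Locs : Type
  Val : Type
  locsFintype : Fintype Locs
  valFintype : Fintype Val
  locsNonempty : Nonempty Locs
  valNonempty : Nonempty Val
  internal : A.Procs → Locs → Alph → Locs → Prop
  write : A.Procs → Locs → Alph → A.DS → Val → Locs → Prop
  read : A.Procs → Locs → Alph → A.DS → Val → Locs → Prop
  write_writer : ∀ p ℓ a d v ℓ', write p ℓ a d v ℓ' → A.Writer d = p
  read_reader : ∀ p ℓ a d v ℓ', read p ℓ a d v ℓ' → A.Reader d = p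
  init : Locs
  finals : Set (A.Procs → Locs)

namespace CPDS

variable {A : Architecture} {Alph : Type}

/-- `ρ⁻(e)`: location before event `e` (`init` if `e` is minimal on its process). -/
def prevLoc (S : CPDS A Alph) (ρ : A.Event → S.Locs) (e : A.Event) : S.Locs :=
  if e.2 ≤ 1 then S.init else ρ (e.1, e.2 - 1)

/-- `ρ` is a run of `S` on `M` (graph semantics). -/
def IsRun (S : CPDS A Alph) (M : PreCBM A Alph) (ρ : A.Event → S.Locs) : Prop :=
  (∀ e, M.isEvent e → M.isInternal e →
    ∃ a, M.label e = some a ∧ S.internal e.1 (S.prevLoc ρ e) a (ρ e)) ∧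
  (∀ d e f, M.mrel d e f → ∃ v a b,
    M.label e = some a ∧ M.label f = some b ∧
    S.write e.1 (S.prevLoc ρ e) a d v (ρ e) ∧
    S.read f.1 (S.prevLoc ρ f) b d v (ρ f))

/-- Location of the last event of process `p` (`init` if it has no event). -/
def lastLoc (S : CPDS A Alph) (M : PreCBM A Alph) (ρ : A.Event → S.Locs)
    (p : A.Procs) : S.Locs :=
  if (M.word p).length = 0 then S.init else ρ (p, (M.word p).length)

/-- `S` accepts `M`: some run reaching a global final location tuple. -/
def AcceptsPre (S : CPDS A Alph) (M : PreCBM A Alph) : Prop :=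
  ∃ ρ : A.Event → S.Locs, S.IsRun M ρ ∧ (fun p => S.lastLoc M ρ p) ∈ S.finals

/-- The graph-semantics language `L(S) ⊆ CBM(A,Alph)`. -/
def lang (S : CPDS A Alph) : Set (CBM A Alph) := {M | S.AcceptsPre M.1}

end CPDS
/-! ### Monadic second-order logic over vertex- and edge-labeled structures -/

/-- MSO formulas over structures with vertex labels `Vl` and binary relations
indexed by `El`.  First-order variables and set variables are indexed by `ℕ`. -/
inductive GMSO (Vl El : Type) : Type
  | lab (a : Vl) (x : ℕ)
  | edge (γ : El) (x y : ℕ)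
  | eq (x y : ℕ)
  | mem (x X : ℕ)
  | or (φ ψ : GMSO Vl El)
  | not (φ : GMSO Vl El)
  | exFO (x : ℕ) (φ : GMSO Vl El)
  | exSO (X : ℕ) (φ : GMSO Vl El)

namespace GMSO

variable {Vl El : Type} {V : Type}

/-- Satisfaction of an MSO formula in a structure with domain `dom`, labeling
relation `lab` and edge relations `edge`, under valuations `ν` (first-order,
partial) and `μ` (second-order). -/
def Sat (dom : Set V) (lab : V → Vl → Prop) (edge : El → V → V → Prop) :
    (ℕ → Option V) → (ℕ → Set V) → GMSO Vl El → Prop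
  | ν, _, .lab a x => ∃ v, ν x = some v ∧ v ∈ dom ∧ lab v a
  | ν, _, .edge γ x y => ∃ u v, ν x = some u ∧ ν y = some v ∧ edge γ u v
  | ν, _, .eq x y => ∃ v, ν x = some v ∧ ν y = some v
  | ν, μ, .mem x X => ∃ v, ν x = some v ∧ v ∈ μ X
  | ν, μ, .or φ ψ => Sat dom lab edge ν μ φ ∨ Sat dom lab edge ν μ ψ
  | ν, μ, .not φ => ¬ Sat dom lab edge ν μ φ
  | ν, μ, .exFO x φ => ∃ v ∈ dom, Sat dom lab edge (Function.update ν x (some v)) μ φ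
  | ν, μ, .exSO X φ => ∃ E : Set V, E ⊆ dom ∧ Sat dom lab edge ν (Function.update μ X E) φ

/-- Free first-order variables. -/
def freeFO : GMSO Vl El → Set ℕ
  | .lab _ x => {x}
  | .edge _ x y => {x, y}
  | .eq x y => {x, y}
  | .mem x _ => {x}
  | .or φ ψ => freeFO φ ∪ freeFO ψ
  | .not φ => freeFO φ
  | .exFO x φ => freeFO φ \ {x}
  | .exSO _ φ => freeFO φ

/-- Free second-order variables. -/
def freeSO : GMSO Vl El → Set ℕ
  | .lab _ _ => ∅
  | .edge _ _ _ => ∅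
  | .eq _ _ => ∅
  | .mem _ X => {X}
  | .or φ ψ => freeSO φ ∪ freeSO ψ
  | .not φ => freeSO φ
  | .exFO _ φ => freeSO φ
  | .exSO X φ => freeSO φ \ {X}

/-- A sentence is a formula without free variables. -/
def Closed (φ : GMSO Vl El) : Prop := freeFO φ = ∅ ∧ freeSO φ = ∅

/-- Satisfaction of a sentence (valuations are irrelevant for sentences). -/
def Models (dom : Set V) (lab : V → Vl → Prop) (edge : El → V → V → Prop)
    (φ : GMSO Vl El) : Prop :=
  Sat dom lab edge (fun _ => none) (fun _ => ∅) φ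

/-- First-order formulas: no second-order quantification. -/
def FirstOrder : GMSO Vl El → Prop
  | .or φ ψ => FirstOrder φ ∧ FirstOrder ψ
  | .not φ => FirstOrder φ
  | .exFO _ φ => FirstOrder φ
  | .exSO _ _ => False
  | _ => True

/-- EMSO formulas: a block of existential second-order quantifiers followed by a
first-order formula. -/
inductive IsEMSO : GMSO Vl El → Prop
  | fo {φ : GMSO Vl El} : FirstOrder φ → IsEMSO φ
  | ex {X : ℕ} {φ : GMSO Vl El} : IsEMSO φ → IsEMSO (.exSO X φ)

end GMSO
/-! ### Labeled binary trees (with unary nodes) and MSO over them -/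

/-- Λ-labeled trees in which every node has 0, 1, or 2 children. -/
inductive BTree (Λ : Type) : Type
  | leaf (l : Λ)
  | unary (l : Λ) (t : BTree Λ)
  | binary (l : Λ) (t₁ t₂ : BTree Λ)

namespace BTree

variable {Λ : Type}

/-- The label at a position (a path from the root; `false` = child 0,
`true` = child 1), if the position exists. -/
def labelAt : BTree Λ → List Bool → Option Λ
  | .leaf l, [] => some l
  | .unary l _, [] => some l
  | .binary l _ _, [] => some l
  | .unary _ t, false :: p => t.labelAt p
  | .binary _ t₁ _, false :: p => t₁.labelAt p
  | .binary _ _ t₂, true :: p => t₂.labelAt p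
  | _, _ => none

/-- The set of node positions of a tree. -/
def positions (t : BTree Λ) : Set (List Bool) := {p | (t.labelAt p).isSome}

/-- The `b`-child relation (`b = false`: child 0, `b = true`: child 1). -/
def childRel (t : BTree Λ) (b : Bool) (p q : List Bool) : Prop :=
  q = p ++ [b] ∧ q ∈ t.positions

/-- Satisfaction of an MSO sentence over the tree (atoms: labels, `↓0`, `↓1`). -/
def TSat (t : BTree Λ) (φ : GMSO Λ Bool) : Prop :=
  GMSO.Models t.positions (fun p l => t.labelAt p = some l) t.childRel φ

end BTree
/-! ### Special tree terms (STTs) and their graph semantics -/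

/-- Special tree terms over vertex labels `Vl` and edge labels `El`,
with colors in `ℕ`. -/
inductive STT (Vl El : Type) : Type
  | atom (i : ℕ) (a : Vl)
  | add (γ : El) (i j : ℕ) (τ : STT Vl El)
  | forget (i : ℕ) (τ : STT Vl El)
  | plus (τ₁ τ₂ : STT Vl El)

namespace STT

variable {Vl El : Type}

/-- The active colors of a term. -/
def activeColors : STT Vl El → Set ℕ
  | .atom i _ => {i}
  | .add _ _ _ τ => τ.activeColors
  | .forget i τ => τ.activeColors \ {i}
  | .plus τ₁ τ₂ => τ₁.activeColors ∪ τ₂.activeColors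

/-- Valid `k`-STTs: colors in `[k] = {1,…,k}`, and the two arguments of `⊕`
have disjoint sets of active colors. -/
def Valid (k : ℕ) : STT Vl El → Prop
  | .atom i _ => 1 ≤ i ∧ i ≤ k
  | .add _ i j τ => 1 ≤ i ∧ i ≤ k ∧ 1 ≤ j ∧ j ≤ k ∧ τ.Valid k
  | .forget i τ => 1 ≤ i ∧ i ≤ k ∧ τ.Valid k
  | .plus τ₁ τ₂ => τ₁.Valid k ∧ τ₂.Valid k ∧ Disjoint τ₁.activeColors τ₂.activeColors

/-- The (partial, injective) coloring `χ_τ`, mapping a color to the position of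
the vertex currently carrying it.  Vertices are identified with the positions
of the atoms in the term (`false` = unique/left child, `true` = right child). -/
def chi : STT Vl El → ℕ → Option (List Bool)
  | .atom i _, j => if j = i then some [] else none
  | .add _ _ _ τ, j => (τ.chi j).map (false :: ·)
  | .forget i τ, j => if j = i then none else (τ.chi j).map (false :: ·)
  | .plus τ₁ τ₂, j =>
      match τ₁.chi j with
      | some p => some (false :: p)
      | none => (τ₂.chi j).map (true :: ·)

/-- The label of a vertex (i.e., of an atom position) of `G_τ`. -/
def vlabel : STT Vl El → List Bool → Option Vl
  | .atom _ a, [] => some a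
  | .add _ _ _ τ, false :: p => τ.vlabel p
  | .forget _ τ, false :: p => τ.vlabel p
  | .plus τ₁ _, false :: p => τ₁.vlabel p
  | .plus _ τ₂, true :: p => τ₂.vlabel p
  | _, _ => none

/-- The vertex set of `G_τ`. -/
def vertices (τ : STT Vl El) : Set (List Bool) := {p | (τ.vlabel p).isSome}

/-- The `γ`-labeled edge relation of `G_τ`. -/
def edgeRel : STT Vl El → El → List Bool → List Bool → Prop
  | .atom _ _, _, _, _ => False
  | .add γ' i j τ, γ, u, v =>
      (∃ u' v', u = false :: u' ∧ v = false :: v' ∧ τ.edgeRel γ u' v') ∨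
      (γ = γ' ∧ ∃ pu pv, τ.chi i = some pu ∧ τ.chi j = some pv ∧
        u = false :: pu ∧ v = false :: pv)
  | .forget _ τ, γ, u, v => ∃ u' v', u = false :: u' ∧ v = false :: v' ∧ τ.edgeRel γ u' v'
  | .plus τ₁ τ₂, γ, u, v =>
      (∃ u' v', u = false :: u' ∧ v = false :: v' ∧ τ₁.edgeRel γ u' v') ∨
      (∃ u' v', u = true :: u' ∧ v = true :: v' ∧ τ₂.edgeRel γ u' v')

/-- `G_τ` is acyclic: the union of all edge relations has an irreflexive
transitive closure. -/
def Acyclic (τ : STT Vl El) : Prop :=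
  ∀ p, ¬ Relation.TransGen (fun u v => ∃ γ, τ.edgeRel γ u v) p p

/-- Satisfaction of a graph-MSO sentence in the graph `G_τ`. -/
def graphSat (τ : STT Vl El) (φ : GMSO Vl El) : Prop :=
  GMSO.Models τ.vertices (fun p a => τ.vlabel p = some a) τ.edgeRel φ

end STT

/-- The label alphabet `Λ^k` of `k`-STTs, seen as labeled binary trees. -/
inductive STTLabel (Vl El : Type) : Type
  | atom (i : ℕ) (a : Vl)
  | add (γ : El) (i j : ℕ)
  | forget (i : ℕ)
  | plus

/-- The binary tree underlying a special tree term. -/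
def STT.toTree {Vl El : Type} : STT Vl El → BTree (STTLabel Vl El)
  | .atom i a => .leaf (.atom i a)
  | .add γ i j τ => .unary (.add γ i j) τ.toTree
  | .forget i τ => .unary (.forget i) τ.toTree
  | .plus τ₁ τ₂ => .binary .plus τ₁.toTree τ₂.toTree
/-! ### Bottom-up tree automata -/

/-- A (nondeterministic) bottom-up tree automaton over `Λ`-labeled trees with
nodes of arity 0, 1 or 2. -/
structure BUTA (Λ : Type) where
  State : Type
  stFintype : Fintype State
  leafT : Λ → State → Prop
  unaryT : Λ → State → State → Prop
  binaryT : Λ → State → State → State → Prop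
  accept : State → Prop

namespace BUTA

variable {Λ : Type}

/-- Bottom-up runs: the state assigned at the root of the given tree. -/
inductive Runs (Aut : BUTA Λ) : BTree Λ → Aut.State → Prop
  | leaf {l s} : Aut.leafT l s → Runs Aut (.leaf l) s
  | unary {l t s' s} : Aut.unaryT l s' s → Runs Aut t s' → Runs Aut (.unary l t) s
  | binary {l t₁ t₂ s₁ s₂ s} : Aut.binaryT l s₁ s₂ s →
      Runs Aut t₁ s₁ → Runs Aut t₂ s₂ → Runs Aut (.binary l t₁ t₂) s

/-- Acceptance: some run reaching an accepting state at the root. -/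
def Accepts (Aut : BUTA Λ) (t : BTree Λ) : Prop := ∃ s, Aut.Runs t s ∧ Aut.accept s

/-- Determinism: the transition relations are partial functions. -/
def Deterministic (Aut : BUTA Λ) : Prop :=
  (∀ l s s', Aut.leafT l s → Aut.leafT l s' → s = s') ∧
  (∀ l s₀ s s', Aut.unaryT l s₀ s → Aut.unaryT l s₀ s' → s = s') ∧
  (∀ l s₁ s₂ s s', Aut.binaryT l s₁ s₂ s → Aut.binaryT l s₁ s₂ s' → s = s')

/-- The number of states. -/
noncomputable def card (Aut : BUTA Λ) : ℕ := @Fintype.card Aut.State Aut.stFintype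

end BUTA
/-! ### CBMs as labeled graphs -/

/-- A structure with domain `dom`, vertex labels in `Alph × Procs` (letter and
process) and edge relations labeled by `{→} ∪ DS` (`none` = process successor)
is a CBM over `(A, Alph)`. -/
def IsCBMGraph (A : Architecture) (Alph : Type) {V : Type}
    (dom : Set V) (lab : V → Option (Alph × A.Procs))
    (edge : Option A.DS → V → V → Prop) : Prop :=
  -- every vertex of the domain is labeled
  (∀ v ∈ dom, ∃ x, lab v = some x) ∧
  -- edges connect vertices of the domain
  (∀ γ u v, edge γ u v → u ∈ dom ∧ v ∈ dom) ∧
  -- on each process, the →-edges form the successor relation of a linear order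
  (∀ p : A.Procs, ∃ l : List V, l.Nodup ∧
    (∀ v, v ∈ l ↔ v ∈ dom ∧ ∃ a, lab v = some (a, p)) ∧
    (∀ u v, u ∈ l → v ∈ l →
      (edge none u v ↔ ∃ n, l[n]? = some u ∧ l[n + 1]? = some v))) ∧
  -- →-edges connect events of the same process
  (∀ u v, edge none u v → ∃ a b p, lab u = some (a, p) ∧ lab v = some (b, p)) ∧
  -- d-edges go from a Writer(d)-event to a Reader(d)-event
  (∀ d u v, edge (some d) u v →
    ∃ a b, lab u = some (a, A.Writer d) ∧ lab v = some (b, A.Reader d)) ∧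
  -- distinct matching edges are pairwise disjoint
  (∀ d₁ d₂ u₁ v₁ u₂ v₂, edge (some d₁) u₁ v₁ → edge (some d₂) u₂ v₂ →
    ¬ (d₁ = d₂ ∧ u₁ = u₂ ∧ v₁ = v₂) → u₁ ≠ u₂ ∧ u₁ ≠ v₂ ∧ v₁ ≠ u₂ ∧ v₁ ≠ v₂) ∧
  -- the transitive closure of the union of all edges is a strict partial order
  (∀ v, ¬ Relation.TransGen (fun u w => ∃ γ, edge γ u w) v v) ∧
  -- LIFO for stacks
  (∀ d, A.kind d = DSKind.stack → ∀ e₁ f₁ e₂ f₂,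
    edge (some d) e₁ f₁ → edge (some d) e₂ f₂ →
    Relation.TransGen (fun u w => ∃ γ, edge γ u w) e₁ e₂ →
    Relation.TransGen (fun u w => ∃ γ, edge γ u w) e₂ f₁ →
    Relation.TransGen (fun u w => ∃ γ, edge γ u w) f₂ f₁) ∧
  -- FIFO for queues
  (∀ d, A.kind d = DSKind.queue → ∀ e₁ f₁ e₂ f₂,
    edge (some d) e₁ f₁ → edge (some d) e₂ f₂ →
    Relation.TransGen (fun u w => ∃ γ, edge γ u w) e₁ e₂ →
    Relation.TransGen (fun u w => ∃ γ, edge γ u w) f₁ f₂)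
/-! ### CPDS acceptance of CBMs presented as labeled graphs -/

namespace CPDS

variable {A : Architecture} {Alph : Type} {V : Type}

/-- `ℓ` is the location before vertex `v`: the location at its `→`-predecessor,
or the initial location if there is none. -/
def GraphPrev (S : CPDS A Alph) (dom : Set V) (edge : Option A.DS → V → V → Prop)
    (ρ : V → S.Locs) (v : V) (ℓ : S.Locs) : Prop :=
  (∃ u, u ∈ dom ∧ edge none u v ∧ ℓ = ρ u) ∨
  ((¬ ∃ u, u ∈ dom ∧ edge none u v) ∧ ℓ = S.init)

/-- The CPDS `S` accepts the CBM presented as a labeled graph: there is a run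
(assignment of locations to vertices consistent with the transitions) whose
tuple of last locations per process is a global final state. -/
def GraphAccepts (S : CPDS A Alph) (dom : Set V)
    (lab : V → Option (Alph × A.Procs)) (edge : Option A.DS → V → V → Prop) : Prop :=
  ∃ ρ : V → S.Locs,
    (∀ v ∈ dom, (¬ ∃ d w, edge (some d) v w ∨ edge (some d) w v) →
      ∃ a p ℓ, lab v = some (a, p) ∧ S.GraphPrev dom edge ρ v ℓ ∧
        S.internal p ℓ a (ρ v)) ∧
    (∀ d u v, edge (some d) u v →
      ∃ val a b ℓu ℓv, lab u = some (a, A.Writer d) ∧ lab v = some (b, A.Reader d) ∧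
        S.GraphPrev dom edge ρ u ℓu ∧ S.GraphPrev dom edge ρ v ℓv ∧
        S.write (A.Writer d) ℓu a d val (ρ u) ∧ S.read (A.Reader d) ℓv b d val (ρ v)) ∧
    (∃ fin ∈ S.finals, ∀ p : A.Procs,
      ((¬ ∃ v ∈ dom, ∃ a, lab v = some (a, p)) → fin p = S.init) ∧
      (∀ v ∈ dom, (∃ a, lab v = some (a, p)) → (¬ ∃ w ∈ dom, edge none v w) →
        fin p = ρ v))

end CPDS

namespace CpdsAux

variable {Vl El Ann : Type}

abbrev Ty (Vl El Ann : Type) : Type := Option Vl × Ann × Set El × Set El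

abbrev St (Vl El Ann : Type) (k : ℕ) : Type :=
  (Fin (k + 1) → Option (Ty Vl El Ann)) × Set (Ty Vl El Ann) × Set (El × Ann × Ann)

def ty (τ : STT Vl El) (α : List Bool → Ann) (v : List Bool) : Ty Vl El Ann :=
  (τ.vlabel v, α v, {γ | ∃ w, τ.edgeRel γ v w}, {γ | ∃ w, τ.edgeRel γ w v})

def summ (k : ℕ) (τ : STT Vl El) (α : List Bool → Ann) : St Vl El Ann k :=
  (fun i => (τ.chi i).map (ty τ α),
   {t | ∃ v, v ∈ τ.vertices ∧ (∀ i, τ.chi i ≠ some v) ∧ ty τ α v = t},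
   {e | ∃ u v, τ.edgeRel e.1 u v ∧ α u = e.2.1 ∧ α v = e.2.2})

def fLeaf (k : ℕ) (i : ℕ) (a : Vl) (x : Ann) : St Vl El Ann k :=
  (fun m => if (m : ℕ) = i then some (some a, x, ∅, ∅) else none, ∅, ∅)

def fAdd {k : ℕ} (γ : El) (i j : Fin (k + 1)) (s : St Vl El Ann k) : St Vl El Ann k :=
  (fun m => (s.1 m).map fun t =>
      (t.1, t.2.1, t.2.2.1 ∪ {γ' | γ' = γ ∧ m = i ∧ (s.1 j).isSome},
        t.2.2.2 ∪ {γ' | γ' = γ ∧ m = j ∧ (s.1 i).isSome}),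
   s.2.1,
   s.2.2 ∪ {e | ∃ x y, s.1 i = some x ∧ s.1 j = some y ∧ e = (γ, x.2.1, y.2.1)})

def fForget {k : ℕ} (i : Fin (k + 1)) (s : St Vl El Ann k) : St Vl El Ann k :=
  (fun m => if m = i then none else s.1 m,
   s.2.1 ∪ {t | s.1 i = some t},
   s.2.2)

def fPlus {k : ℕ} (s s' : St Vl El Ann k) : St Vl El Ann k :=
  (fun m => match s.1 m with
    | some t => some t
    | none => s'.1 m,
   s.2.1 ∪ s'.2.1,
   s.2.2 ∪ s'.2.2)

theorem chi_inj (τ : STT Vl El) : ∀ i j v, τ.chi i = some v → τ.chi j = some v → i = j := by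
  induction τ with
  | atom i a => intro m n v h1 h2; simp only [STT.chi] at h1 h2; grind
  | add γ i j τ ih =>
    intro m n v h1 h2
    simp only [STT.chi, Option.map_eq_some_iff] at h1 h2
    obtain ⟨x, hx, rfl⟩ := h1
    obtain ⟨y, hy, h⟩ := h2
    simp at h; subst h
    exact ih _ _ _ hx hy
  | forget i τ ih =>
    intro m n v h1 h2
    simp only [STT.chi] at h1 h2
    split_ifs at h1 h2
    simp only [Option.map_eq_some_iff] at h1 h2
    obtain ⟨x, hx, rfl⟩ := h1
    obtain ⟨y, hy, h⟩ := h2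
    simp at h; subst h
    exact ih _ _ _ hx hy
  | plus τ₁ τ₂ ih1 ih2 =>
    intro m n v h1 h2
    simp only [STT.chi] at h1 h2
    cases e1 : τ₁.chi m <;> cases e2 : τ₁.chi n <;> simp [e1, e2] at h1 h2 <;> grind

theorem chi_active (τ : STT Vl El) : ∀ i v, τ.chi i = some v → i ∈ τ.activeColors := by
  induction τ with
  | atom i a => intro m v h1; simp only [STT.chi, STT.activeColors] at *; grind
  | add γ i j τ ih =>
    intro m v h1
    simp only [STT.chi, Option.map_eq_some_iff] at h1
    obtain ⟨x, hx, rfl⟩ := h1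
    exact ih _ _ hx
  | forget i τ ih =>
    intro m v h1
    simp only [STT.chi] at h1
    split_ifs at h1 with hm
    simp only [Option.map_eq_some_iff] at h1
    obtain ⟨x, hx, rfl⟩ := h1
    exact ⟨ih _ _ hx, hm⟩
  | plus τ₁ τ₂ ih1 ih2 =>
    intro m v h1
    simp only [STT.chi] at h1
    cases e1 : τ₁.chi m with
    | some x => exact Or.inl (ih1 _ _ e1)
    | none =>
      simp [e1] at h1
      obtain ⟨x, hx, rfl⟩ := h1
      exact Or.inr (ih2 _ _ hx)

theorem chi_vertex (τ : STT Vl El) : ∀ i v, τ.chi i = some v → v ∈ τ.vertices := by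
  induction τ with
  | atom i a =>
    intro m v h1
    simp only [STT.chi] at h1
    split_ifs at h1
    simp at h1; subst h1
    simp [STT.vertices, STT.vlabel]
  | add γ i j τ ih =>
    intro m v h1
    simp only [STT.chi, Option.map_eq_some_iff] at h1
    obtain ⟨x, hx, rfl⟩ := h1
    exact ih _ _ hx
  | forget i τ ih =>
    intro m v h1
    simp only [STT.chi] at h1
    split_ifs at h1 with hm
    simp only [Option.map_eq_some_iff] at h1
    obtain ⟨x, hx, rfl⟩ := h1
    exact ih _ _ hx
  | plus τ₁ τ₂ ih1 ih2 =>
    intro m v h1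
    simp only [STT.chi] at h1
    cases e1 : τ₁.chi m with
    | some x =>
      simp [e1] at h1
      subst h1
      exact ih1 _ _ e1
    | none =>
      simp [e1] at h1
      obtain ⟨x, hx, rfl⟩ := h1
      exact ih2 _ _ hx

theorem summ_atom (k i : ℕ) (a : Vl) (α : List Bool → Ann) :
    summ k (STT.atom i a : STT Vl El) α = fLeaf k i a (α []) := by
  refine Prod.ext ?_ (Prod.ext ?_ ?_)
  · funext m
    simp only [summ, fLeaf, STT.chi]
    split_ifs <;> simp [ty, STT.vlabel, STT.edgeRel]
  · ext t
    simp only [summ, fLeaf, Set.mem_ofPred_eq, Set.mem_empty_iff_false, iff_false]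
    rintro ⟨v, hv, h, -⟩
    cases v with
    | nil => exact h i (by simp [STT.chi])
    | cons b v => simp [STT.vertices, STT.vlabel] at hv
  · ext t
    simp [summ, fLeaf, STT.edgeRel]

theorem vertices_false_add (γ : El) (i j : ℕ) (τ : STT Vl El) (v : List Bool) :
    v ∈ (STT.add γ i j τ).vertices ↔ ∃ w, v = false :: w ∧ w ∈ τ.vertices := by
  rcases v with _ | ⟨_ | _, v⟩ <;> simp [STT.vertices, STT.vlabel]

theorem vertices_false_forget (i : ℕ) (τ : STT Vl El) (v : List Bool) :
    v ∈ (STT.forget i τ).vertices ↔ ∃ w, v = false :: w ∧ w ∈ τ.vertices := by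
  rcases v with _ | ⟨_ | _, v⟩ <;> simp [STT.vertices, STT.vlabel]

theorem vertices_plus (τ₁ τ₂ : STT Vl El) (v : List Bool) :
    v ∈ (STT.plus τ₁ τ₂).vertices ↔
      (∃ w, v = false :: w ∧ w ∈ τ₁.vertices) ∨ (∃ w, v = true :: w ∧ w ∈ τ₂.vertices) := by
  rcases v with _ | ⟨_ | _, v⟩ <;> simp [STT.vertices, STT.vlabel]

theorem ty_forget (i : ℕ) (τ : STT Vl El) (α : List Bool → Ann) (v : List Bool) :
    ty (STT.forget i τ) α (false :: v) = ty τ (fun p => α (false :: p)) v := by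
  simp [ty, STT.vlabel, STT.edgeRel]

theorem ty_plus_false (τ₁ τ₂ : STT Vl El) (α : List Bool → Ann) (v : List Bool) :
    ty (STT.plus τ₁ τ₂) α (false :: v) = ty τ₁ (fun p => α (false :: p)) v := by
  simp [ty, STT.vlabel, STT.edgeRel]

theorem ty_plus_true (τ₁ τ₂ : STT Vl El) (α : List Bool → Ann) (v : List Bool) :
    ty (STT.plus τ₁ τ₂) α (true :: v) = ty τ₂ (fun p => α (true :: p)) v := by
  simp [ty, STT.vlabel, STT.edgeRel]

theorem ty_add (γ : El) (i j : ℕ) (τ : STT Vl El) (α : List Bool → Ann) (v : List Bool) :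
    ty (STT.add γ i j τ) α (false :: v) =
      (τ.vlabel v, α (false :: v),
        {γ' | ∃ w, τ.edgeRel γ' v w} ∪ {γ' | γ' = γ ∧ τ.chi i = some v ∧ (τ.chi j).isSome},
        {γ' | ∃ w, τ.edgeRel γ' w v} ∪ {γ' | γ' = γ ∧ τ.chi j = some v ∧ (τ.chi i).isSome}) := by
  refine Prod.ext rfl (Prod.ext rfl (Prod.ext ?_ ?_))
  · ext g
    simp only [ty, STT.edgeRel, Set.mem_ofPred_eq, Set.mem_union, Option.isSome_iff_exists]
    constructor
    · rintro ⟨w, ⟨u', v', h1, h2, h3⟩ | ⟨rfl, pu, pv, h1, h2, h3, h4⟩⟩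
      · simp at h1; subst h1; exact Or.inl ⟨_, h3⟩
      · simp at h3; subst h3; exact Or.inr ⟨rfl, h1, _, h2⟩
    · rintro (⟨w, h⟩ | ⟨rfl, h1, w, h2⟩)
      · exact ⟨_, Or.inl ⟨_, _, rfl, rfl, h⟩⟩
      · exact ⟨_, Or.inr ⟨rfl, _, _, h1, h2, rfl, rfl⟩⟩
  · ext g
    simp only [ty, STT.edgeRel, Set.mem_ofPred_eq, Set.mem_union, Option.isSome_iff_exists]
    constructor
    · rintro ⟨w, ⟨u', v', h1, h2, h3⟩ | ⟨rfl, pu, pv, h1, h2, h3, h4⟩⟩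
      · simp at h2; subst h2; exact Or.inl ⟨_, h3⟩
      · simp at h4; subst h4; exact Or.inr ⟨rfl, h2, _, h1⟩
    · rintro (⟨w, h⟩ | ⟨rfl, h1, w, h2⟩)
      · exact ⟨_, Or.inl ⟨_, _, rfl, rfl, h⟩⟩
      · exact ⟨_, Or.inr ⟨rfl, _, _, h2, h1, rfl, rfl⟩⟩

theorem summ_add {k : ℕ} (γ : El) (i j : Fin (k + 1)) (τ : STT Vl El) (α : List Bool → Ann) :
    summ k (STT.add γ i j τ) α = fAdd γ i j (summ k τ (fun p => α (false :: p))) := by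
  refine Prod.ext ?_ (Prod.ext ?_ ?_)
  · funext m
    simp only [summ, fAdd, STT.chi]
    cases h : τ.chi m with
    | none => simp
    | some v =>
      have e1 : ∀ n : Fin (k + 1), τ.chi n = some v ↔ m = n := by
        intro n
        constructor
        · intro h'; exact Fin.ext (chi_inj τ _ _ _ h h')
        · rintro rfl; exact h
      simp only [Option.map_some]
      rw [ty_add]
      simp [ty, e1]
  · ext t
    simp only [summ, fAdd, Set.mem_ofPred_eq, vertices_false_add]
    have key : ∀ v, (∀ n, τ.chi n ≠ some v) →
        ty (STT.add γ i j τ) α (false :: v) = ty τ (fun p => α (false :: p)) v := by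
      intro v hv
      rw [ty_add]
      simp [ty, hv]
    have key2 : ∀ v, (∀ n, (STT.add γ i j τ).chi n ≠ some (false :: v)) ↔
        ∀ n, τ.chi n ≠ some v := by
      intro v; simp [STT.chi]
    constructor
    · rintro ⟨_, ⟨v, rfl, hv⟩, hc, rfl⟩
      rw [key2] at hc
      exact ⟨v, hv, hc, (key v hc).symm⟩
    · rintro ⟨v, hv, hc, rfl⟩
      exact ⟨_, ⟨v, rfl, hv⟩, (key2 v).2 hc, key v hc⟩
  · ext ⟨g, x, y⟩
    simp only [summ, fAdd, STT.edgeRel, Set.mem_ofPred_eq, Set.mem_union]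
    constructor
    · rintro ⟨_, _, ⟨u, v, rfl, rfl, h⟩ | ⟨rfl, u, v, h1, h2, rfl, rfl⟩, rfl, rfl⟩
      · exact Or.inl ⟨u, v, h, rfl, rfl⟩
      · right
        exact ⟨_, _, by rw [h1]; rfl, by rw [h2]; rfl, rfl⟩
    · rintro (⟨u, v, h, rfl, rfl⟩ | ⟨a, b, h1, h2, h3⟩)
      · exact ⟨_, _, Or.inl ⟨u, v, rfl, rfl, h⟩, rfl, rfl⟩
      · simp only [Option.map_eq_some_iff] at h1 h2
        obtain ⟨u, hu, rfl⟩ := h1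
        obtain ⟨v, hv, rfl⟩ := h2
        simp only [Prod.mk.injEq, ty] at h3
        obtain ⟨rfl, rfl, rfl⟩ := h3
        exact ⟨_, _, Or.inr ⟨rfl, u, v, hu, hv, rfl, rfl⟩, rfl, rfl⟩

theorem summ_forget {k : ℕ} (i : Fin (k + 1)) (τ : STT Vl El) (α : List Bool → Ann) :
    summ k (STT.forget i τ) α = fForget i (summ k τ (fun p => α (false :: p))) := by
  refine Prod.ext ?_ (Prod.ext ?_ ?_)
  · funext m
    simp only [summ, fForget, STT.chi, Fin.ext_iff]
    split_ifs
    · rfl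
    · cases τ.chi m <;> simp [ty_forget]
  · ext t
    simp only [summ, fForget, Set.mem_ofPred_eq, vertices_false_forget, Set.mem_union,
      Option.map_eq_some_iff]
    constructor
    · rintro ⟨_, ⟨v, rfl, hv⟩, hc, rfl⟩
      by_cases h : τ.chi i = some v
      · exact Or.inr ⟨v, h, (ty_forget ..).symm⟩
      · refine Or.inl ⟨v, hv, fun n hn => ?_, (ty_forget ..).symm⟩
        have hni : n ≠ i := by rintro rfl; exact h hn
        exact hc n (by simp [STT.chi, hni, hn])
    · rintro (⟨v, hv, hc, rfl⟩ | ⟨v, hv, rfl⟩)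
      · refine ⟨_, ⟨v, rfl, hv⟩, fun n => ?_, ty_forget ..⟩
        simp [STT.chi, hc]
      · refine ⟨_, ⟨v, rfl, chi_vertex _ _ _ hv⟩, fun n hn => ?_, ty_forget ..⟩
        simp [STT.chi] at hn
        exact hn.1 (chi_inj τ _ _ _ hn.2 hv)
  · ext ⟨g, x, y⟩
    simp only [summ, fForget, STT.edgeRel, Set.mem_ofPred_eq]
    constructor
    · rintro ⟨_, _, ⟨u, v, rfl, rfl, h⟩, rfl, rfl⟩
      exact ⟨u, v, h, rfl, rfl⟩
    · rintro ⟨u, v, h, rfl, rfl⟩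
      exact ⟨_, _, ⟨u, v, rfl, rfl, h⟩, rfl, rfl⟩

theorem summ_plus {k : ℕ} (τ₁ τ₂ : STT Vl El) (hd : Disjoint τ₁.activeColors τ₂.activeColors)
    (α : List Bool → Ann) :
    summ k (STT.plus τ₁ τ₂) α =
      fPlus (summ k τ₁ (fun p => α (false :: p))) (summ k τ₂ (fun p => α (true :: p))) := by
  refine Prod.ext ?_ (Prod.ext ?_ ?_)
  · funext m
    simp only [summ, fPlus, STT.chi]
    cases τ₁.chi m with
    | some v => simp [ty_plus_false]
    | none => cases τ₂.chi m <;> simp [ty_plus_true]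
  · ext t
    simp only [summ, fPlus, Set.mem_ofPred_eq, vertices_plus, Set.mem_union]
    have k1 : ∀ v n, (STT.plus τ₁ τ₂).chi n = some (false :: v) ↔ τ₁.chi n = some v := by
      intro v n
      simp only [STT.chi]
      cases τ₁.chi n <;> simp
    have k2 : ∀ v n, (STT.plus τ₁ τ₂).chi n = some (true :: v) ↔ τ₂.chi n = some v := by
      intro v n
      simp only [STT.chi]
      cases h : τ₁.chi n with
      | none => simp
      | some w =>
        simp only [Option.some.injEq, List.cons.injEq, Bool.false_eq_true, false_and, false_iff]
        intro h'
        exact Set.disjoint_left.1 hd (chi_active _ _ _ h) (chi_active _ _ _ h')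
    constructor
    · rintro ⟨_, ⟨v, rfl, hv⟩ | ⟨v, rfl, hv⟩, hc, rfl⟩
      · exact Or.inl ⟨v, hv, fun n => by rw [ne_eq, ← k1]; exact hc n, (ty_plus_false ..).symm⟩
      · exact Or.inr ⟨v, hv, fun n => by rw [ne_eq, ← k2]; exact hc n, (ty_plus_true ..).symm⟩
    · rintro (⟨v, hv, hc, rfl⟩ | ⟨v, hv, hc, rfl⟩)
      · exact ⟨_, Or.inl ⟨v, rfl, hv⟩, fun n => by rw [ne_eq, k1]; exact hc n, ty_plus_false ..⟩
      · exact ⟨_, Or.inr ⟨v, rfl, hv⟩, fun n => by rw [ne_eq, k2]; exact hc n, ty_plus_true ..⟩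
  · ext ⟨g, x, y⟩
    simp only [summ, fPlus, STT.edgeRel, Set.mem_ofPred_eq, Set.mem_union]
    constructor
    · rintro ⟨_, _, ⟨u, v, rfl, rfl, h⟩ | ⟨u, v, rfl, rfl, h⟩, rfl, rfl⟩
      · exact Or.inl ⟨u, v, h, rfl, rfl⟩
      · exact Or.inr ⟨u, v, h, rfl, rfl⟩
    · rintro (⟨u, v, h, rfl, rfl⟩ | ⟨u, v, h, rfl, rfl⟩)
      · exact ⟨_, _, Or.inl ⟨u, v, rfl, rfl, h⟩, rfl, rfl⟩
      · exact ⟨_, _, Or.inr ⟨u, v, rfl, rfl, h⟩, rfl, rfl⟩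

/-- The generic summary automaton. -/
noncomputable def aut (Vl El Ann : Type) [Finite Vl] [Finite El] [Finite Ann] (k : ℕ)
    (acc : Set (Ty Vl El Ann) → Set (El × Ann × Ann) → Prop) : BUTA (STTLabel Vl El) where
  State := St Vl El Ann k
  stFintype := Fintype.ofFinite _
  leafT l s := ∃ i a x, l = .atom i a ∧ s = fLeaf k i a x
  unaryT l s s' :=
    (∃ γ, ∃ i j : Fin (k + 1), l = .add γ i j ∧ s' = fAdd γ i j s) ∨
    (∃ i : Fin (k + 1), l = .forget i ∧ s' = fForget i s)
  binaryT l s₁ s₂ s := l = .plus ∧ s = fPlus s₁ s₂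
  accept s := acc s.2.1 s.2.2

theorem runs_leaf {Λ : Type} {B : BUTA Λ} {l : Λ} {s : B.State} (h : B.Runs (.leaf l) s) :
    B.leafT l s := by
  cases h with
  | leaf h => exact h

theorem runs_unary {Λ : Type} {B : BUTA Λ} {l : Λ} {t : BTree Λ} {s : B.State}
    (h : B.Runs (.unary l t) s) : ∃ s', B.unaryT l s' s ∧ B.Runs t s' := by
  cases h with
  | unary h h' => exact ⟨_, h, h'⟩

theorem runs_binary {Λ : Type} {B : BUTA Λ} {l : Λ} {t₁ t₂ : BTree Λ} {s : B.State}
    (h : B.Runs (.binary l t₁ t₂) s) :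
    ∃ s₁ s₂, B.binaryT l s₁ s₂ s ∧ B.Runs t₁ s₁ ∧ B.Runs t₂ s₂ := by
  cases h with
  | binary h h1 h2 => exact ⟨_, _, h, h1, h2⟩

theorem runs_iff [Finite Vl] [Finite El] [Finite Ann] (k : ℕ)
    (acc : Set (Ty Vl El Ann) → Set (El × Ann × Ann) → Prop) (τ : STT Vl El) (hτ : τ.Valid k) :
    ∀ s : St Vl El Ann k, (aut Vl El Ann k acc).Runs τ.toTree s ↔ ∃ α, s = summ k τ α := by
  induction τ with
  | atom i a =>
    intro s
    constructor
    · intro h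
      replace h := runs_leaf h
      obtain ⟨i', a', x, h1, rfl⟩ := h
      cases h1
      exact ⟨fun _ => x, by rw [summ_atom]⟩
    · rintro ⟨α, rfl⟩
      exact .leaf ⟨i, a, α [], rfl, summ_atom ..⟩
  | add γ i j τ ih =>
    obtain ⟨-, hi, -, hj, hv⟩ := hτ
    intro s
    constructor
    · intro h
      obtain ⟨s', h, hr⟩ := runs_unary h
      obtain ⟨α, rfl⟩ := (ih hv _).1 hr
      rcases h with ⟨γ', i', j', h1, rfl⟩ | ⟨i', h1, -⟩
      · cases h1
        exact ⟨fun p => α p.tail, by rw [summ_add]; rfl⟩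
      · cases h1
    · rintro ⟨α, rfl⟩
      exact .unary (Or.inl ⟨γ, ⟨i, by omega⟩, ⟨j, by omega⟩, rfl, summ_add γ ⟨i, _⟩ ⟨j, _⟩ τ α⟩)
        ((ih hv _).2 ⟨_, rfl⟩)
  | forget i τ ih =>
    obtain ⟨-, hi, hv⟩ := hτ
    intro s
    constructor
    · intro h
      obtain ⟨s', h, hr⟩ := runs_unary h
      obtain ⟨α, rfl⟩ := (ih hv _).1 hr
      rcases h with ⟨γ', i', j', h1, rfl⟩ | ⟨i', h1, rfl⟩
      · cases h1
      · cases h1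
        exact ⟨fun p => α p.tail, by rw [summ_forget]; rfl⟩
    · rintro ⟨α, rfl⟩
      exact .unary (Or.inr ⟨⟨i, by omega⟩, rfl, summ_forget ⟨i, _⟩ τ α⟩)
        ((ih hv _).2 ⟨_, rfl⟩)
  | plus τ₁ τ₂ ih1 ih2 =>
    obtain ⟨hv1, hv2, hd⟩ := hτ
    intro s
    constructor
    · intro h
      obtain ⟨s₁, s₂, h, hr1, hr2⟩ := runs_binary h
      obtain ⟨α, rfl⟩ := (ih1 hv1 _).1 hr1
      obtain ⟨β, rfl⟩ := (ih2 hv2 _).1 hr2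
      obtain ⟨-, rfl⟩ := h
      exact ⟨fun p => if p.head? = some true then β p.tail else α p.tail,
        by rw [summ_plus _ _ hd]; simp⟩
    · rintro ⟨α, rfl⟩
      exact .binary ⟨rfl, summ_plus τ₁ τ₂ hd α⟩ ((ih1 hv1 _).2 ⟨_, rfl⟩) ((ih2 hv2 _).2 ⟨_, rfl⟩)

/-- The acceptance condition: annotations are (previous location, location, value). -/
def acc {A : Architecture} {Alph : Type} (S : CPDS A Alph)
    (P : Set (Ty (Alph × A.Procs) (Option A.DS) (S.Locs × S.Locs × S.Val)))
    (Q : Set (Option A.DS × (S.Locs × S.Locs × S.Val) × (S.Locs × S.Locs × S.Val))) : Prop :=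
  (∀ t ∈ P, ∀ a p, t.1 = some (a, p) →
    (none ∉ t.2.2.2 → t.2.1.1 = S.init) ∧
    ((∀ d, some d ∉ t.2.2.1 ∧ some d ∉ t.2.2.2) → S.internal p t.2.1.1 a t.2.1.2.1) ∧
    (∀ d, some d ∈ t.2.2.1 → S.write p t.2.1.1 a d t.2.1.2.2 t.2.1.2.1) ∧
    (∀ d, some d ∈ t.2.2.2 → S.read p t.2.1.1 a d t.2.1.2.2 t.2.1.2.1)) ∧
  (∀ x y, (none, x, y) ∈ Q → y.1 = x.2.1) ∧
  (∀ d x y, (some d, x, y) ∈ Q → x.2.2 = y.2.2) ∧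
  (∃ fin ∈ S.finals, ∀ p,
    ((¬ ∃ t ∈ P, ∃ a, t.1 = some (a, p)) → fin p = S.init) ∧
    (∀ t ∈ P, (∃ a, t.1 = some (a, p)) → none ∉ t.2.2.1 → fin p = t.2.1.2.1))

theorem acc_iff {A : Architecture} {Alph : Type} (S : CPDS A Alph) (k : ℕ)
    (τ : STT (Alph × A.Procs) (Option A.DS)) (hχ : ∀ i, τ.chi i = none)
    (hG : IsCBMGraph A Alph τ.vertices τ.vlabel τ.edgeRel) :
    (∃ α, acc S (summ k τ α).2.1 (summ k τ α).2.2) ↔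
      S.GraphAccepts τ.vertices τ.vlabel τ.edgeRel := by
  obtain ⟨hlab, hdom, hlist, hsame, hwr, hdisj, -, -, -⟩ := hG
  have mP : ∀ (α : List Bool → S.Locs × S.Locs × S.Val) t,
      t ∈ (summ k τ α).2.1 ↔ ∃ v ∈ τ.vertices, ty τ α v = t := by
    intro α t; simp [summ, hχ]
  have mQ : ∀ (α : List Bool → S.Locs × S.Locs × S.Val) γ x y,
      (γ, x, y) ∈ (summ k τ α).2.2 ↔ ∃ u v, τ.edgeRel γ u v ∧ α u = x ∧ α v = y := by
    intro α γ x y; rfl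
  constructor
  · rintro ⟨α, h1, h2, h3, fin, hfin, h4⟩
    have hP : ∀ v, v ∈ τ.vertices → ty τ α v ∈ (summ k τ α).2.1 :=
      fun v hv => (mP α _).2 ⟨v, hv, rfl⟩
    have prev : ∀ v ∈ τ.vertices,
        S.GraphPrev τ.vertices τ.edgeRel (fun v => (α v).2.1) v (α v).1 := by
      intro v hv
      by_cases h : ∃ u, u ∈ τ.vertices ∧ τ.edgeRel none u v
      · obtain ⟨u, hu, he⟩ := h
        exact Or.inl ⟨u, hu, he, h2 _ _ ((mQ α _ _ _).2 ⟨u, v, he, rfl, rfl⟩)⟩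
      · refine Or.inr ⟨h, ?_⟩
        obtain ⟨⟨a, p⟩, hx⟩ := hlab v hv
        refine (h1 _ (hP v hv) a p hx).1 ?_
        rintro ⟨w, hw⟩
        exact h ⟨w, (hdom _ _ _ hw).1, hw⟩
    refine ⟨fun v => (α v).2.1, ?_, ?_, fin, hfin, ?_⟩
    · intro v hv hint
      obtain ⟨⟨a, p⟩, hx⟩ := hlab v hv
      refine ⟨a, p, _, hx, prev v hv, (h1 _ (hP v hv) a p hx).2.1 ?_⟩
      intro d
      constructor
      · rintro ⟨w, hw⟩; exact hint ⟨d, w, Or.inl hw⟩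
      · rintro ⟨w, hw⟩; exact hint ⟨d, w, Or.inr hw⟩
    · intro d u v he
      obtain ⟨a, b, ha, hb⟩ := hwr d u v he
      obtain ⟨hu, hv⟩ := hdom _ _ _ he
      refine ⟨(α u).2.2, a, b, _, _, ha, hb, prev u hu, prev v hv,
        (h1 _ (hP u hu) a _ ha).2.2.1 d ⟨v, he⟩, ?_⟩
      rw [h3 d _ _ ((mQ α _ _ _).2 ⟨u, v, he, rfl, rfl⟩)]
      exact (h1 _ (hP v hv) b _ hb).2.2.2 d ⟨u, he⟩
    · intro p
      refine ⟨fun hn => (h4 p).1 ?_, fun v hv ha hn => (h4 p).2 _ (hP v hv) ha ?_⟩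
      · rintro ⟨t, ht, a, ha⟩
        obtain ⟨v, hv, rfl⟩ := (mP α _).1 ht
        exact hn ⟨v, hv, a, ha⟩
      · rintro ⟨w, hw⟩
        exact hn ⟨w, (hdom _ _ _ hw).2, hw⟩
  · rintro ⟨ρ, h1, h2, fin, hfin, h4⟩
    classical
    have upred : ∀ u u' v, τ.edgeRel none u v → τ.edgeRel none u' v → u = u' := by
      intro u u' v he he'
      obtain ⟨a, b, p, hu, hv⟩ := hsame _ _ he
      obtain ⟨a', b', p', hu', hv'⟩ := hsame _ _ he'
      obtain ⟨hud, hvd⟩ := hdom _ _ _ he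
      obtain ⟨hud', -⟩ := hdom _ _ _ he'
      rw [hv] at hv'
      obtain ⟨rfl, rfl⟩ : b = b' ∧ p = p' := by simpa using hv'
      obtain ⟨l, hnd, hl, hE⟩ := hlist p
      have mu := (hl u).2 ⟨hud, _, hu⟩
      have mu' := (hl u').2 ⟨hud', _, hu'⟩
      have mv := (hl v).2 ⟨hvd, _, hv⟩
      obtain ⟨n, hn, hn1⟩ := (hE _ _ mu mv).1 he
      obtain ⟨m, hm, hm1⟩ := (hE _ _ mu' mv).1 he'
      obtain ⟨b1, e1⟩ := List.getElem?_eq_some_iff.1 hn1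
      obtain ⟨b2, e2⟩ := List.getElem?_eq_some_iff.1 hm1
      have : n + 1 = m + 1 := (hnd.getElem_inj_iff).1 (e1.trans e2.symm)
      have : n = m := by omega
      subst this
      rw [hn] at hm
      exact Option.some.inj hm
    have exL : ∀ v, ∃ ℓ, S.GraphPrev τ.vertices τ.edgeRel ρ v ℓ := by
      intro v
      by_cases h : ∃ u, u ∈ τ.vertices ∧ τ.edgeRel none u v
      · obtain ⟨u, hu, he⟩ := h
        exact ⟨_, Or.inl ⟨u, hu, he, rfl⟩⟩
      · exact ⟨_, Or.inr ⟨h, rfl⟩⟩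
    choose L hL using exL
    have uL : ∀ v ℓ, S.GraphPrev τ.vertices τ.edgeRel ρ v ℓ → ℓ = L v := by
      intro v ℓ h
      rcases h with ⟨u, hu, he, rfl⟩ | ⟨hn, rfl⟩ <;>
        rcases hL v with ⟨u', hu', he', h'⟩ | ⟨hn', h'⟩
      · rw [h', upred _ _ _ he he']
      · exact absurd ⟨u, hu, he⟩ hn'
      · exact absurd ⟨u', hu', he'⟩ hn
      · exact h'.symm
    choose W hW using h2
    obtain ⟨w0⟩ := S.valNonempty
    have exF : ∀ x, ∃ val, ∀ d u v (h : τ.edgeRel (some d) u v), x = u ∨ x = v →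
        val = W d u v h := by
      intro x
      by_cases h : ∃ d u v, τ.edgeRel (some d) u v ∧ (x = u ∨ x = v)
      · obtain ⟨d, u, v, he, hx⟩ := h
        refine ⟨W d u v he, fun d' u' v' he' hx' => ?_⟩
        have : d = d' ∧ u = u' ∧ v = v' := by
          by_contra hne
          have := hdisj _ _ _ _ _ _ he he' hne
          grind
        obtain ⟨rfl, rfl, rfl⟩ := this
        rfl
      · exact ⟨w0, fun d u v he hx => absurd ⟨d, u, v, he, hx⟩ h⟩
    choose F hF using exF
    refine ⟨fun v => (L v, ρ v, F v), ?_, ?_, ?_, fin, hfin, ?_⟩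
    · intro t ht a p ha
      obtain ⟨v, hv, rfl⟩ := (mP _ _).1 ht
      change τ.vlabel v = some (a, p) at ha
      refine ⟨fun hn => ?_, fun hn => ?_, ?_, ?_⟩
      · rcases hL v with ⟨u, hu, he, h'⟩ | ⟨hn', h'⟩
        · exact absurd ⟨u, he⟩ hn
        · exact h'
      · obtain ⟨a', p', ℓ, hx, hp, hi⟩ := h1 v hv (by
          rintro ⟨d, w, hw | hw⟩
          · exact (hn d).1 ⟨w, hw⟩
          · exact (hn d).2 ⟨w, hw⟩)
        rw [ha] at hx
        obtain ⟨rfl, rfl⟩ : a = a' ∧ p = p' := by simpa using hx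
        rw [uL _ _ hp] at hi
        exact hi
      · rintro d ⟨w, hw⟩
        obtain ⟨a', b, ℓu, ℓv, hla, hlb, hpu, hpv, hwrite, hread⟩ := hW d v w hw
        rw [ha] at hla
        obtain ⟨rfl, rfl⟩ : a = a' ∧ p = A.Writer d := by simpa using hla
        rw [uL _ _ hpu, ← hF v d v w hw (Or.inl rfl)] at hwrite
        exact hwrite
      · rintro d ⟨w, hw⟩
        obtain ⟨a', b, ℓu, ℓv, hla, hlb, hpu, hpv, hwrite, hread⟩ := hW d w v hw
        rw [ha] at hlb
        obtain ⟨rfl, rfl⟩ : a = b ∧ p = A.Reader d := by simpa using hlb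
        rw [uL _ _ hpv, ← hF v d w v hw (Or.inr rfl)] at hread
        exact hread
    · intro x y hxy
      obtain ⟨u, v, he, rfl, rfl⟩ := (mQ _ _ _ _).1 hxy
      exact (uL v _ (Or.inl ⟨u, (hdom _ _ _ he).1, he, rfl⟩)).symm
    · intro d x y hxy
      obtain ⟨u, v, he, rfl, rfl⟩ := (mQ _ _ _ _).1 hxy
      exact (hF u d u v he (Or.inl rfl)).trans (hF v d u v he (Or.inr rfl)).symm
    · intro p
      refine ⟨fun hn => (h4 p).1 ?_, fun t ht ha hn => ?_⟩
      · rintro ⟨v, hv, a, ha⟩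
        exact hn ⟨_, (mP _ _).2 ⟨v, hv, rfl⟩, a, ha⟩
      · obtain ⟨v, hv, rfl⟩ := (mP _ _).1 ht
        exact (h4 p).2 v hv ha (fun ⟨w, _, he⟩ => hn ⟨w, he⟩)

end CpdsAux

/-- Given an architecture `A`, alphabet `Alph`, a CPDS `S`
over `(A, Alph)`, and `k ≥ 1`, one can construct a tree automaton such that for
every valid `k`-STT `τ` with empty coloring domain whose graph `G_τ` is a CBM
over `(A, Alph)`: the automaton accepts (the tree of) `τ` iff `G_τ ∈ L(S)`. -/
theorem cpds_stt_automaton (A : Architecture) (Alph : Type) [Fintype Alph]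
    (S : CPDS A Alph) (k : ℕ) (hk : 1 ≤ k) :
    ∃ Aut : BUTA (STTLabel (Alph × A.Procs) (Option A.DS)),
      ∀ τ : STT (Alph × A.Procs) (Option A.DS),
        τ.Valid k → (∀ i, τ.chi i = none) →
        IsCBMGraph A Alph τ.vertices τ.vlabel τ.edgeRel →
        (Aut.Accepts τ.toTree ↔ S.GraphAccepts τ.vertices τ.vlabel τ.edgeRel) := by
  haveI := S.locsFintype
  haveI := S.valFintype
  refine ⟨CpdsAux.aut _ _ (S.Locs × S.Locs × S.Val) k (CpdsAux.acc S), fun τ hv hχ hG => ?_⟩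
  rw [← CpdsAux.acc_iff S k τ hχ hG]
  constructor
  · rintro ⟨s, hr, ha⟩
    obtain ⟨α, rfl⟩ := (CpdsAux.runs_iff k _ τ hv s).1 hr
    exact ⟨α, ha⟩
  · rintro ⟨α, ha⟩
    exact ⟨_, (CpdsAux.runs_iff k _ τ hv _).2 ⟨α, rfl⟩, ha⟩
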